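/- If c ∈ K_0 with v_0(c) ≥ d_0 − d_j, and 0 ≤ j, r < p^2 with j + r < p^2, then c·Ψ^{(j)}·ρ_r ≡ c·π_0^{d_{j+r} − d_r}·ρ_{j+r} mod 𝔐_2^{p^2·e_0 − p·b_2 − (p^2−p+1)·b_1}; equality holds when there is no carry in adding the p-adic expansions of j and r. -/

import Mathlib

/-- A normalized discrete valuation on a field `K`, recorded as a function
`v : K → ℤ`.  The value of `v` at `0` is irrelevant: all conditions below only
refer to nonzero elements (the convention `v 0 = ∞` being understood). -/
structure IsDiscVal {K : Type*} [Field K] (v : K → ℤ) : Prop where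
  map_one : v 1 = 0
  map_mul : ∀ x y : K, x ≠ 0 → y ≠ 0 → v (x * y) = v x + v y
  min_le_add : ∀ x y : K, x ≠ 0 → y ≠ 0 → x + y ≠ 0 → min (v x) (v y) ≤ v (x + y)
  exists_uniformizer : ∃ π : K, π ≠ 0 ∧ v π = 1

theorem Commute.add_pow_prime_sub {R : Type*} [Ring R] {x y : R} (h : Commute x y) {p : ℕ}
    (hp : p.Prime) :
    (x + y) ^ p - x ^ p - y ^ p =
      ∑ k ∈ Finset.Ico 1 p, x ^ k * y ^ (p - k) * (p.choose k : R) := by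
  rw [h.add_pow, Finset.sum_range_succ, Finset.range_eq_Ico,
    Finset.sum_eq_sum_Ico_succ_bot hp.pos]
  simp

namespace IsDiscVal

section Ball

variable {K : Type*} [Field K] {v : K → ℤ}

theorem map_neg (hv : IsDiscVal v) (x : K) : v (-x) = v x := by
  rcases eq_or_ne x 0 with rfl | hx
  · simp
  have h1 := hv.map_mul (-1) (-1) (by simp) (by simp)
  have h2 := hv.map_mul (-1) x (by simp) hx
  have h3 := hv.map_one
  rw [neg_mul_neg, one_mul] at h1
  rw [neg_one_mul] at h2
  omega

theorem map_pow (hv : IsDiscVal v) {x : K} (hx : x ≠ 0) (n : ℕ) : v (x ^ n) = n * v x := by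
  induction n with
  | zero => simp [hv.map_one]
  | succ n ih =>
    rw [pow_succ, hv.map_mul _ _ (pow_ne_zero _ hx) hx, ih]
    push_cast
    ring

theorem map_inv (hv : IsDiscVal v) {x : K} (hx : x ≠ 0) : v x⁻¹ = -v x := by
  have := hv.map_mul x x⁻¹ hx (inv_ne_zero hx)
  rw [mul_inv_cancel₀ hx, hv.map_one] at this
  omega

theorem map_zpow (hv : IsDiscVal v) {x : K} (hx : x ≠ 0) (n : ℤ) : v (x ^ n) = n * v x := by
  cases n with
  | ofNat n => simpa using hv.map_pow hx n
  | negSucc n =>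
    rw [zpow_negSucc, hv.map_inv (pow_ne_zero _ hx), hv.map_pow hx, Int.negSucc_eq]
    push_cast
    ring

/-- The additive subgroup of elements of valuation at least `n`. -/
def ball (hv : IsDiscVal v) (n : ℤ) : AddSubgroup K where
  carrier := {x | x = 0 ∨ n ≤ v x}
  zero_mem' := Or.inl rfl
  add_mem' := by
    rintro x y hx hy
    rcases eq_or_ne x 0 with rfl | hx0
    · simpa using hy
    rcases eq_or_ne y 0 with rfl | hy0
    · simpa using hx
    by_cases hxy : x + y = 0
    · exact Or.inl hxy
    · have := hv.min_le_add x y hx0 hy0 hxy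
      have hx' := hx.resolve_left hx0
      have hy' := hy.resolve_left hy0
      exact Or.inr (by omega)
  neg_mem' := by
    rintro x (rfl | hx)
    · exact Or.inl (by simp)
    · exact Or.inr (by rwa [hv.map_neg])

theorem mem_ball_of_le (hv : IsDiscVal v) {n : ℤ} {x : K} (h : n ≤ v x) : x ∈ hv.ball n :=
  Or.inr h

theorem le_of_mem_ball (hv : IsDiscVal v) {n : ℤ} {x : K} (hx : x ≠ 0) (h : x ∈ hv.ball n) :
    n ≤ v x :=
  h.resolve_left hx

theorem ball_anti (hv : IsDiscVal v) {m n : ℤ} (h : m ≤ n) {x : K} (hx : x ∈ hv.ball n) :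
    x ∈ hv.ball m :=
  hx.imp_right h.trans

theorem one_mem_ball (hv : IsDiscVal v) : (1 : K) ∈ hv.ball 0 :=
  hv.mem_ball_of_le hv.map_one.ge

theorem mul_mem_ball (hv : IsDiscVal v) {m n : ℤ} {x y : K} (hx : x ∈ hv.ball m)
    (hy : y ∈ hv.ball n) : x * y ∈ hv.ball (m + n) := by
  rcases eq_or_ne x 0 with rfl | hx0
  · exact Or.inl (zero_mul _)
  rcases eq_or_ne y 0 with rfl | hy0
  · exact Or.inl (mul_zero _)
  · refine Or.inr ?_
    rw [hv.map_mul x y hx0 hy0]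
    exact add_le_add (hx.resolve_left hx0) (hy.resolve_left hy0)

theorem pow_mem_ball (hv : IsDiscVal v) {n : ℤ} {x : K} (hx : x ∈ hv.ball n) (k : ℕ) :
    x ^ k ∈ hv.ball (k * n) := by
  induction k with
  | zero => simpa using hv.one_mem_ball
  | succ k ih =>
    rw [pow_succ]
    exact hv.ball_anti (by push_cast; linarith) (hv.mul_mem_ball ih hx)

theorem natCast_mem_ball (hv : IsDiscVal v) (k : ℕ) : (k : K) ∈ hv.ball 0 := by
  simpa using AddSubgroup.nsmul_mem _ hv.one_mem_ball k

theorem natCast_mem_ball_of_dvd (hv : IsDiscVal v) {p k : ℕ} {e : ℤ} (hp : (p : K) ∈ hv.ball e)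
    (h : p ∣ k) : (k : K) ∈ hv.ball e := by
  obtain ⟨l, rfl⟩ := h
  simpa using hv.mul_mem_ball hp (hv.natCast_mem_ball l)

theorem map_natCast_of_coprime [CharZero K] (hv : IsDiscVal v) {p k : ℕ}
    (hp : (p : K) ∈ hv.ball 1) (hk : k ≠ 0) (h : k.Coprime p) : v (k : K) = 0 := by
  have hk0 : (k : K) ≠ 0 := Nat.cast_ne_zero.2 hk
  have h0 := hv.le_of_mem_ball hk0 (hv.natCast_mem_ball k)
  by_contra hne
  have h1 : (k : K) ∈ hv.ball 1 := hv.mem_ball_of_le (by omega)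
  have hint (z : ℤ) : (z : K) ∈ hv.ball 0 := by
    simpa using AddSubgroup.zsmul_mem _ hv.one_mem_ball z
  have hbez : (1 : K) = k * (k.gcdA p : K) + p * (k.gcdB p : K) := by
    have := Nat.gcd_eq_gcd_ab k p
    rw [h.gcd_eq_one] at this
    exact_mod_cast congrArg (Int.cast : ℤ → K) this
  have hone : (1 : K) ∈ hv.ball 1 := by
    rw [hbez]
    exact add_mem (by simpa using hv.mul_mem_ball h1 (hint _))
      (by simpa using hv.mul_mem_ball hp (hint _))
  have := hv.le_of_mem_ball one_ne_zero hone
  rw [hv.map_one] at this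
  omega

theorem map_add_eq_left (hv : IsDiscVal v) {x y : K} (hx : x ≠ 0) (hy : y ∈ hv.ball (v x + 1)) :
    x + y ≠ 0 ∧ v (x + y) = v x := by
  have hne : x + y ≠ 0 := by
    intro h
    have : x ∈ hv.ball (v x + 1) := by
      obtain rfl := eq_neg_of_add_eq_zero_right h
      simpa using hy
    have := hv.le_of_mem_ball hx this
    omega
  refine ⟨hne, le_antisymm ?_ ?_⟩
  · by_contra hlt
    have hxy : x + y ∈ hv.ball (v x + 1) := hv.mem_ball_of_le (by omega)
    have := sub_mem hxy hy
    rw [add_sub_cancel_right] at this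
    have := hv.le_of_mem_ball hx this
    omega
  · exact hv.le_of_mem_ball hne
      (add_mem (hv.mem_ball_of_le le_rfl) (hv.ball_anti (by omega) hy))

theorem add_pow_prime_sub_mem_ball (hv : IsDiscVal v) {p : ℕ} (hp : p.Prime) {e a b l : ℤ}
    (hpe : (p : K) ∈ hv.ball e) {x y : K} (hx : x ∈ hv.ball a) (hy : y ∈ hv.ball b)
    (hl : ∀ k : ℤ, 1 ≤ k → k + 1 ≤ p → l ≤ k * a + (p - k) * b) :
    (x + y) ^ p - x ^ p - y ^ p ∈ hv.ball (e + l) := by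
  rw [(Commute.all x y).add_pow_prime_sub hp]
  refine sum_mem fun k hk => ?_
  rw [Finset.mem_Ico] at hk
  have h1 := hv.mul_mem_ball (hv.pow_mem_ball hx k) (hv.pow_mem_ball hy (p - k))
  have h2 := hv.natCast_mem_ball_of_dvd hpe (hp.dvd_choose_self (by omega) hk.2)
  refine hv.ball_anti ?_ (hv.mul_mem_ball h1 h2)
  have := hl k (by omega) (by omega)
  rw [Nat.cast_sub hk.2.le]
  linarith

theorem mem_ball_of_pow_sub_mem (hv : IsDiscVal v) {p : ℕ} (hp : 2 ≤ p) {k : ℤ} (hk : 0 ≤ k)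
    {z : K} (hz : z ^ p - z ∈ hv.ball (-(p * k))) : z ∈ hv.ball (-k) := by
  rcases eq_or_ne z 0 with rfl | hz0
  · exact zero_mem _
  refine hv.mem_ball_of_le ?_
  by_contra hlt
  have hp' : (2 : ℤ) ≤ p := by exact_mod_cast hp
  have h : z ^ p ∈ hv.ball (p * v z + 1) := by
    rw [← sub_add_cancel (z ^ p) z]
    exact add_mem (hv.ball_anti (by nlinarith) hz)
      (hv.ball_anti (by nlinarith) (hv.mem_ball_of_le le_rfl))
  have := hv.le_of_mem_ball (pow_ne_zero _ hz0) h
  rw [hv.map_pow hz0] at this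
  omega

theorem mem_ball_of_sum_mem (hv : IsDiscVal v) {ι : Type*} [Fintype ι] (f : ι → K) {n : ℤ}
    (hf : ∀ i j, f i ≠ 0 → f j ≠ 0 → v (f i) = v (f j) → i = j) (h : ∑ i, f i ∈ hv.ball n)
    (i : ι) : f i ∈ hv.ball n := by
  classical
  by_cases hi : f i = 0
  · exact Or.inl hi
  obtain ⟨j, hj, hmin⟩ := Finset.exists_min_image (Finset.univ.filter fun i => f i ≠ 0)
    (fun i => v (f i)) ⟨i, by simpa using hi⟩
  simp only [Finset.mem_filter, Finset.mem_univ, true_and] at hj hmin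
  have hrest : ∑ k ∈ Finset.univ.erase j, f k ∈ hv.ball (v (f j) + 1) := by
    refine sum_mem fun k hk => ?_
    by_cases hk0 : f k = 0
    · exact Or.inl hk0
    have h1 := hmin k hk0
    have h2 : v (f j) ≠ v (f k) := fun h => Finset.ne_of_mem_erase hk (hf j k hj hk0 h).symm
    exact hv.mem_ball_of_le (by omega)
  have hle : n ≤ v (f j) := by
    by_contra hlt
    have hfj : f j ∈ hv.ball (v (f j) + 1) := by
      rw [← Finset.add_sum_erase _ _ (Finset.mem_univ j)] at h
      simpa using sub_mem (hv.ball_anti (by omega) h) hrest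
    have := hv.le_of_mem_ball hj hfj
    omega
  exact hv.mem_ball_of_le (hle.trans (hmin i hi))

theorem add_pow_sub_pow_mem_ball (hv : IsDiscVal v) {a : ℤ} (ha : 0 ≤ a) {x u : K}
    (hx : x ∈ hv.ball (-a)) (hu : u ∈ hv.ball 0) (n : ℕ) :
    (x + u) ^ n - x ^ n ∈ hv.ball (-(n * a) + a) := by
  induction n with
  | zero => simp
  | succ n ih =>
    have h1 := hv.mul_mem_ball (add_mem hx (hv.ball_anti (by omega) hu)) ih
    have h2 := hv.mul_mem_ball hu (hv.pow_mem_ball hx n)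
    have : (x + u) ^ (n + 1) - x ^ (n + 1) = (x + u) * ((x + u) ^ n - x ^ n) + u * x ^ n := by
      ring
    rw [this]
    exact add_mem (hv.ball_anti (by push_cast; linarith) h1)
      (hv.ball_anti (by push_cast; linarith) h2)

theorem add_pow_sub_pow_div_mem_ball [CharZero K] (hv : IsDiscVal v) {p : ℕ} (hp : p.Prime)
    {e a h : ℤ} (hpe : v (p : K) = e) {x u : K} (hx : x ∈ hv.ball (-a)) (hu : u ∈ hv.ball h)
    (ha : 0 ≤ a) (hh : (p - 1) * a ≤ h) (hhe : e ≤ p * h) :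
    ((x + u) ^ p - x ^ p) / (p : K) ∈ hv.ball 0 := by
  have hp2 : (2 : ℤ) ≤ p := by exact_mod_cast hp.two_le
  have hp0 : (p : K) ≠ 0 := Nat.cast_ne_zero.2 hp.ne_zero
  have h1 := hv.add_pow_prime_sub_mem_ball (l := 0) hp (hv.mem_ball_of_le hpe.ge) hx hu
    (fun k hk hk' => by
      have hh0 : 0 ≤ h := by nlinarith
      nlinarith [mul_nonneg (by omega : 0 ≤ p - 1 - k) hh0,
        mul_nonneg (by omega : 0 ≤ p - 1 - k) ha])
  have h2 := hv.pow_mem_ball hu p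
  have h3 : ((x + u) ^ p - x ^ p) ∈ hv.ball e := by
    rw [← sub_add_cancel ((x + u) ^ p - x ^ p) (u ^ p)]
    exact add_mem (hv.ball_anti (by omega) h1) (hv.ball_anti hhe h2)
  have h4 : (p : K)⁻¹ ∈ hv.ball (-e) := hv.mem_ball_of_le (by rw [hv.map_inv hp0, hpe])
  rw [div_eq_mul_inv]
  simpa using hv.mul_mem_ball h3 h4

end Ball

section Gains

variable {F K : Type*} [Field F] [Field K] [Algebra F K] {v : K → ℤ}

/-- The operator `T` raises the valuation of every element by at least `g`. -/
def Gains (hv : IsDiscVal v) (T : Module.End F K) (g : ℤ) : Prop :=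
  ∀ n : ℤ, ∀ x ∈ hv.ball n, T x ∈ hv.ball (n + g)

namespace Gains

variable {hv : IsDiscVal v} {S T : Module.End F K} {g h : ℤ}

theorem anti (hT : hv.Gains T g) (hle : h ≤ g) : hv.Gains T h :=
  fun n x hx => hv.ball_anti (by omega) (hT n x hx)

theorem one : hv.Gains (1 : Module.End F K) 0 := fun n x hx => by simpa using hx

theorem add (hS : hv.Gains S g) (hT : hv.Gains T g) : hv.Gains (S + T) g :=
  fun n x hx => add_mem (hS n x hx) (hT n x hx)

theorem sub (hS : hv.Gains S g) (hT : hv.Gains T g) : hv.Gains (S - T) g :=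
  fun n x hx => sub_mem (hS n x hx) (hT n x hx)

theorem neg (hT : hv.Gains T g) : hv.Gains (-T) g :=
  fun n x hx => neg_mem (hT n x hx)

theorem mul (hS : hv.Gains S g) (hT : hv.Gains T h) : hv.Gains (S * T) (g + h) :=
  fun n x hx => hv.ball_anti (by omega) (hS _ _ (hT n x hx))

theorem pow (hT : hv.Gains T g) (k : ℕ) : hv.Gains (T ^ k) (k * g) := by
  induction k with
  | zero => simpa using one
  | succ k ih =>
    rw [pow_succ]
    exact (ih.mul hT).anti (by push_cast; linarith)

theorem sum {ι : Type*} {s : Finset ι} {f : ι → Module.End F K}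
    (hf : ∀ i ∈ s, hv.Gains (f i) g) : hv.Gains (∑ i ∈ s, f i) g := fun n x hx => by
  rw [LinearMap.sum_apply]
  exact sum_mem fun i hi => hf i hi n x hx

theorem smul {c : F} {k : ℤ} (hc : algebraMap F K c ∈ hv.ball k) (hT : hv.Gains T g) :
    hv.Gains (c • T) (k + g) := fun n x hx => by
  rw [LinearMap.smul_apply, Algebra.smul_def]
  exact hv.ball_anti (by omega) (hv.mul_mem_ball hc (hT n x hx))

theorem natCast {k : ℕ} {e : ℤ} (hk : (k : K) ∈ hv.ball e) :
    hv.Gains (k : Module.End F K) e := fun n x hx => by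
  rw [Module.End.natCast_apply, nsmul_eq_mul]
  exact hv.ball_anti (by omega) (hv.mul_mem_ball hk hx)

theorem one_add_pow_prime_sub {p : ℕ} (hp : p.Prime) {e : ℤ} (hpe : (p : K) ∈ hv.ball e)
    (hT : hv.Gains T g) (hg : 0 ≤ g) : hv.Gains ((1 + T) ^ p - 1 - T ^ p) (e + g) := by
  have h := (Commute.one_left T).add_pow_prime_sub hp
  rw [one_pow] at h
  rw [h]
  refine sum fun k hk => ?_
  rw [Finset.mem_Ico] at hk
  rw [one_pow, one_mul]
  refine ((hT.pow (p - k)).mul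
    (natCast (hv.natCast_mem_ball_of_dvd hpe (hp.dvd_choose_self (by omega) hk.2)))).anti ?_
  have : (1 : ℤ) ≤ ((p - k : ℕ) : ℤ) := by omega
  nlinarith

end Gains

/-- If the powers of `X` up to the degree have valuations that are distinct modulo the ramification
index, the gain of a linear operator can be read off on these powers. -/
theorem gains_of_pow_basis [FiniteDimensional F K] (hv : IsDiscVal v) {v0 : F → ℤ} {N : ℕ}
    (hN : Module.finrank F K = N) (hram : ∀ x : F, x ≠ 0 → v (algebraMap F K x) = N * v0 x)
    {X : K} (hX : X ≠ 0) {b : ℤ} (hXv : v X = -b) (hb : IsCoprime (N : ℤ) b)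
    {T : Module.End F K} {g : ℤ} (hT : ∀ i : ℕ, T (X ^ i) ∈ hv.ball (-(i * b) + g)) :
    hv.Gains T g := by
  have hval (c : F) (hc : c ≠ 0) (i : ℕ) : v (c • X ^ i) = N * v0 c - i * b := by
    rw [Algebra.smul_def, hv.map_mul _ _ (by simpa using hc) (pow_ne_zero _ hX), hram c hc,
      hv.map_pow hX, hXv]
    ring
  have hmem (c : Fin N → F) (n : ℤ) (hc : ∑ i, c i • X ^ (i : ℕ) ∈ hv.ball n) (i : Fin N) :
      c i • X ^ (i : ℕ) ∈ hv.ball n := by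
    refine hv.mem_ball_of_sum_mem _ (fun i j hi hj hij => ?_) hc i
    rw [hval _ (left_ne_zero_of_smul hi), hval _ (left_ne_zero_of_smul hj)] at hij
    have hdvd : (N : ℤ) ∣ ((i : ℕ) - (j : ℕ) : ℤ) :=
      hb.dvd_of_dvd_mul_right ⟨v0 (c i) - v0 (c j), by linarith⟩
    have := Int.eq_zero_of_abs_lt_dvd hdvd (by rw [abs_lt]; omega)
    exact Fin.ext (by omega)
  have hli : LinearIndependent F fun i : Fin N => X ^ (i : ℕ) := by
    rw [Fintype.linearIndependent_iff]
    intro c hc i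
    by_contra hci
    have hne : c i • X ^ (i : ℕ) ≠ 0 := smul_ne_zero hci (pow_ne_zero _ hX)
    have h0 := hmem c (v (c i • X ^ (i : ℕ)) + 1) (by rw [hc]; exact zero_mem _) i
    have := hv.le_of_mem_ball hne h0
    omega
  have hspan := hli.span_eq_top_of_card_eq_finrank' (by simp [hN])
  intro n x hx
  have hxs : x ∈ Submodule.span F (Set.range fun i : Fin N => X ^ (i : ℕ)) := by
    rw [hspan]; trivial
  obtain ⟨c, rfl⟩ := (Submodule.mem_span_range_iff_exists_fun F).1 hxs
  rw [map_sum]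
  refine sum_mem fun i _ => ?_
  rw [map_smul]
  rcases eq_or_ne (c i) 0 with hci | hci
  · simp [hci]
  have h1 := hv.le_of_mem_ball (smul_ne_zero hci (pow_ne_zero _ hX)) (hmem c n hx i)
  rw [hval _ hci] at h1
  rw [Algebra.smul_def]
  exact hv.ball_anti (by rw [hram _ hci]; linarith)
    (hv.mul_mem_ball (hv.mem_ball_of_le le_rfl) (hT i))

end Gains

section ArtinSchreier

variable {K : Type*} [Field K] {v : K → ℤ}

theorem map_artinSchreier_root (hv : IsDiscVal v) {p : ℕ} (hp : 2 ≤ p) {b : ℤ} (hb : 0 < b)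
    {A x : K} (hA : A ≠ 0) (hAv : v A = -(p * b)) (hx : x ^ p - x = A) : x ≠ 0 ∧ v x = -b := by
  have hp2 : (2 : ℤ) ≤ p := by exact_mod_cast hp
  have hmem : x ∈ hv.ball (-b) :=
    hv.mem_ball_of_pow_sub_mem hp hb.le (by rw [hx]; exact hv.mem_ball_of_le hAv.ge)
  have hx0 : x ≠ 0 := by
    rintro rfl
    exact hA (by rw [← hx, zero_pow (by omega), sub_zero])
  have h := (hv.map_add_eq_left hA (hv.ball_anti (by rw [hAv]; nlinarith) hmem)).2
  rw [← hx, sub_add_cancel, hv.map_pow hx0, hx, hAv] at h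
  exact ⟨hx0, by nlinarith⟩

theorem map_witt_generator [CharZero K] (hv : IsDiscVal v) {p : ℕ} (hp : p.Prime) {e b m : ℤ}
    (hpe : v (p : K) = e) (hb : 0 < b) (hm : (p ^ 2 - 1) * b < p ^ 2 * m)
    (he : p * (p ^ 2 - 1) * b < e) {A M x₁ x₂ : K} (hA : A ≠ 0) (hM : M ≠ 0)
    (hAv : v A = -(p ^ 2 * b)) (hMv : v M = -(p ^ 2 * m)) (hx₁ : x₁ ^ p - x₁ = A)
    (hx₂ : x₂ ^ p - x₂ = M ^ p * A + (x₁ ^ p + A ^ p - (x₁ + A) ^ p) / (p : K)) :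
    x₂ - M * x₁ ≠ 0 ∧ v (x₂ - M * x₁) = -(p ^ 2 * m + b) := by
  have hp2 : (2 : ℤ) ≤ p := by exact_mod_cast hp.two_le
  have hp0 : (p : K) ≠ 0 := Nat.cast_ne_zero.2 hp.ne_zero
  obtain ⟨hx₁0, hx₁v⟩ := hv.map_artinSchreier_root hp.two_le (b := p * b) (by positivity) hA
    (by rw [hAv]; ring) hx₁
  have hpb := hv.mem_ball_of_le hpe.ge
  have hpp : 0 < (p : ℤ) ^ 2 * m := lt_of_le_of_lt (mul_nonneg (by nlinarith) hb.le) hm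
  have hmp : (p : ℤ) * ((p ^ 2 - 1) * b) < p * (p ^ 2 * m) := by gcongr
  have hpb2 : 0 ≤ (p : ℤ) * b * (p - 2) := mul_nonneg (by positivity) (by omega)
  have hpb3 : 0 ≤ (p : ℤ) ^ 2 * b * (p - 1) := mul_nonneg (by positivity) (by omega)
  have hD : (x₁ ^ p + A ^ p - (x₁ + A) ^ p) / (p : K) ∈
      hv.ball (-(p * b + (p - 1) * (p ^ 2 * b))) := by
    have h1 := hv.add_pow_prime_sub_mem_ball (l := -(p * b + (p - 1) * (p ^ 2 * b))) hp hpb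
      (hv.mem_ball_of_le hx₁v.ge) (hv.mem_ball_of_le hAv.ge) (fun k hk hk' => by
        have : 0 ≤ (k - 1) * (p * b * (p - 1)) := by
          apply mul_nonneg (by omega)
          exact mul_nonneg (by positivity) (by omega)
        nlinarith)
    have h2 : (p : K)⁻¹ ∈ hv.ball (-e) := hv.mem_ball_of_le (by rw [hv.map_inv hp0, hpe])
    have h3 := neg_mem (hv.mul_mem_ball h1 h2)
    rw [show (x₁ ^ p + A ^ p - (x₁ + A) ^ p) / (p : K) =
      -(((x₁ + A) ^ p - x₁ ^ p - A ^ p) * (p : K)⁻¹) by rw [div_eq_mul_inv]; ring]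
    exact hv.ball_anti (by linarith) h3
  have hMA : v (M ^ p * A) = -(p * (p ^ 2 * m + p * b)) := by
    rw [hv.map_mul _ _ (pow_ne_zero _ hM) hA, hv.map_pow hM, hAv, hMv]
    ring
  have hx₂b : x₂ ∈ hv.ball (-(p ^ 2 * m + p * b)) := by
    refine hv.mem_ball_of_pow_sub_mem hp.two_le (by positivity) ?_
    rw [hx₂]
    refine add_mem (hv.mem_ball_of_le hMA.ge) (hv.ball_anti ?_ hD)
    nlinarith
  have hMx₁ : v (M * x₁) = -(p ^ 2 * m + p * b) := by
    rw [hv.map_mul _ _ hM hx₁0, hMv, hx₁v]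
    ring
  have hMpx₁ : v (-(M ^ p * x₁)) = -(p * (p ^ 2 * m + b)) := by
    rw [hv.map_neg, hv.map_mul _ _ (pow_ne_zero _ hM) hx₁0, hv.map_pow hM, hMv, hx₁v]
    ring
  have hX : x₂ - M * x₁ ∈ hv.ball (-(p ^ 2 * m + p * b)) :=
    sub_mem hx₂b (hv.mem_ball_of_le hMx₁.ge)
  have hcross := hv.add_pow_prime_sub_mem_ball (l := -(p * (p ^ 2 * m + p * b))) hp hpb hX
    (hv.mem_ball_of_le hMx₁.ge) (fun k _ _ => by linarith)
  rw [sub_add_cancel] at hcross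
  have hpow : (x₂ - M * x₁) ^ p = -(M ^ p * x₁) +
      (x₂ + (x₁ ^ p + A ^ p - (x₁ + A) ^ p) / (p : K) -
        (x₂ ^ p - (x₂ - M * x₁) ^ p - (M * x₁) ^ p)) := by
    have h1 : x₁ ^ p = x₁ + A := by linear_combination hx₁
    have h2 : (x₁ ^ p + A ^ p - (x₁ + A) ^ p) / (p : K) = x₂ ^ p - x₂ - M ^ p * A := by
      linear_combination -hx₂
    rw [h2, mul_pow, h1]
    ring
  have hrest : x₂ + (x₁ ^ p + A ^ p - (x₁ + A) ^ p) / (p : K) -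
      (x₂ ^ p - (x₂ - M * x₁) ^ p - (M * x₁) ^ p) ∈ hv.ball (v (-(M ^ p * x₁)) + 1) := by
    rw [hMpx₁]
    refine sub_mem (add_mem (hv.ball_anti ?_ hx₂b) (hv.ball_anti ?_ hD)) (hv.ball_anti ?_ hcross)
    · nlinarith
    · nlinarith
    · nlinarith
  obtain ⟨hne, hval⟩ :=
    hv.map_add_eq_left (neg_ne_zero.2 (mul_ne_zero (pow_ne_zero p hM) hx₁0)) hrest
  rw [← hpow] at hne hval
  have hX0 : x₂ - M * x₁ ≠ 0 := by
    intro h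
    exact hne (by rw [h, zero_pow hp.ne_zero])
  rw [hv.map_pow hX0, hMpx₁] at hval
  refine ⟨hX0, ?_⟩
  have : (p : ℤ) * v (x₂ - M * x₁) = p * -(p ^ 2 * m + b) := by rw [hval]; ring
  exact mul_left_cancel₀ (by omega) this

end ArtinSchreier

section Galois

variable {F K : Type*} [Field F] [Field K] [CharZero K] [Algebra F K] {v : K → ℤ}

theorem iterate_sub_mem_ball (hv : IsDiscVal v) {p : ℕ} (hp : p.Prime) {e b m : ℤ}
    (hpe : v (p : K) = e) (hb : 0 < b) (hm : 0 ≤ m)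
    (he : p * (p ^ 2 - 1) * b < e) (hme : p ^ 2 * (p - 1) * m + (2 * p * (p - 1) + 1) * b < e)
    {σ : K ≃ₐ[F] K} (hσ : hv.Gains (σ.toLinearMap : Module.End F K) 0) {μ : F} {x₁ x₂ ε δ : K}
    (hμ : algebraMap F K μ ∈ hv.ball (-(p ^ 2 * m))) (hx₁ : x₁ ∈ hv.ball (-(p * b)))
    (hσx₁ : σ x₁ = x₁ + 1 + ε) (hε : ε ∈ hv.ball (e - p * (p - 1) * b))
    (hσx₂ : σ x₂ = x₂ + (x₁ ^ p + 1 - (x₁ + 1) ^ p) / (p : K) + δ) (hδ : δ ∈ hv.ball 0) :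
    (σ ^ p) (x₂ - algebraMap F K μ * x₁) - (x₂ - algebraMap F K μ * x₁) ∈ hv.ball 0 := by
  have hp2 : (2 : ℤ) ≤ p := by exact_mod_cast hp.two_le
  have hp0 : (p : K) ≠ 0 := Nat.cast_ne_zero.2 hp.ne_zero
  have hσpow (i : ℕ) {n : ℤ} {x : K} (hx : x ∈ hv.ball n) : (σ ^ i) x ∈ hv.ball n := by
    have := hσ.pow i n x hx
    rwa [← AlgEquiv.pow_toLinearMap, mul_zero, add_zero] at this
  have hy (i : ℕ) : (σ ^ (i + 1)) x₁ = (σ ^ i) x₁ + 1 + (σ ^ i) ε := by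
    rw [pow_succ, AlgEquiv.mul_apply, hσx₁, map_add, map_add, _root_.map_one]
  have hbp : 0 ≤ (p : ℤ) * b := by positivity
  have hbp2 : 0 ≤ (p : ℤ) * b * (p - 2) := mul_nonneg (by positivity) (by omega)
  have hbp3 : 0 ≤ (p : ℤ) ^ 2 * b * (p - 2) := mul_nonneg (by positivity) (by omega)
  have hmm : 0 ≤ (p : ℤ) ^ 2 * m * (p - 2) := mul_nonneg (by positivity) (by omega)
  have hdiv {x u : K} (hx : x ∈ hv.ball (-(p * b))) (hu : u ∈ hv.ball (e - p * (p - 1) * b)) :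
      ((x + u) ^ p - x ^ p) / (p : K) ∈ hv.ball 0 := by
    refine hv.add_pow_sub_pow_div_mem_ball hp hpe hx hu hbp ?_ ?_
    · have : 0 ≤ (p : ℤ) ^ 2 * m * (p - 1) := mul_nonneg (by positivity) (by omega)
      nlinarith
    · have : 0 ≤ (p - 1) * (e - p * (p ^ 2 - 1) * b) := mul_nonneg (by omega) (by omega)
      have : 0 ≤ (p : ℤ) * b * (p - 1) * (p ^ 2 - p - 1) :=
        mul_nonneg (mul_nonneg hbp (by omega)) (by nlinarith)
      nlinarith
  have hstep (i : ℕ) : (σ ^ (i + 1)) (x₂ - algebraMap F K μ * x₁) -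
      (σ ^ i) (x₂ - algebraMap F K μ * x₁) =
      -(((σ ^ (i + 1)) x₁ ^ p - (σ ^ i) x₁ ^ p) / (p : K)) +
        (((σ ^ i) x₁ + 1 + (σ ^ i) ε) ^ p - ((σ ^ i) x₁ + 1) ^ p) / (p : K) +
        (1 / (p : K) - algebraMap F K μ) + (σ ^ i) δ - algebraMap F K μ * (σ ^ i) ε := by
    rw [← hy i, pow_succ, AlgEquiv.mul_apply, AlgEquiv.mul_apply, map_sub σ, hσx₂, _root_.map_mul σ,
      AlgEquiv.commutes, hσx₁]
    simp only [map_sub, map_add, _root_.map_mul, map_div₀, _root_.map_pow, _root_.map_one, map_natCast,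
      AlgEquiv.commutes]
    ring
  have hsum := Finset.sum_range_sub (fun i => (σ ^ i) (x₂ - algebraMap F K μ * x₁)) p
  simp only [pow_zero, AlgEquiv.one_apply] at hsum
  rw [← hsum, Finset.sum_congr rfl fun i _ => hstep i]
  simp only [Finset.sum_sub_distrib, Finset.sum_add_distrib, Finset.sum_neg_distrib]
  rw [← Finset.sum_div, Finset.sum_range_sub (fun i => (σ ^ i) x₁ ^ p) p]
  have hε0 : (0 : ℤ) ≤ -(p ^ 2 * m) + (e - p * (p - 1) * b) := by nlinarith
  refine sub_mem (add_mem (add_mem (add_mem (neg_mem ?_) ?_) ?_) ?_) ?_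
  · have hκ := Finset.sum_range_sub (fun i => (σ ^ i) x₁) p
    simp only [hy, add_assoc, add_sub_cancel_left, Finset.sum_add_distrib, Finset.sum_const,
      Finset.card_range, nsmul_eq_mul, mul_one, pow_zero, AlgEquiv.one_apply] at hκ
    rw [pow_zero, AlgEquiv.one_apply, ← sub_add_cancel ((σ ^ p) x₁) x₁, ← hκ, add_comm _ x₁]
    refine hdiv hx₁ (add_mem (hv.mem_ball_of_le ?_) (sum_mem fun i _ => hσpow i hε))
    rw [hpe]
    nlinarith
  · exact sum_mem fun i _ =>
      hdiv (add_mem (hσpow i hx₁) (hv.ball_anti (by omega) hv.one_mem_ball)) (hσpow i hε)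
  · rw [Finset.sum_const, Finset.sum_const, Finset.card_range, nsmul_eq_mul, nsmul_eq_mul,
      mul_one_div_cancel hp0]
    refine sub_mem hv.one_mem_ball
      (hv.ball_anti ?_ (hv.mul_mem_ball (hv.mem_ball_of_le hpe.ge) hμ))
    nlinarith
  · exact sum_mem fun i _ => hσpow i hδ
  · exact sum_mem fun i _ => hv.ball_anti hε0 (hv.mul_mem_ball hμ (hσpow i hε))

/-- The gains of the operators `σ` and `σ ^ p - 1`. -/
theorem gains_generator [FiniteDimensional F K] (hv : IsDiscVal v) {v0 : F → ℤ} {p : ℕ}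
    (hp : p.Prime) (hdeg : Module.finrank F K = p ^ 2)
    (hram : ∀ x : F, x ≠ 0 → v (algebraMap F K x) = (p : ℤ) ^ 2 * v0 x)
    {e b m : ℤ} (hpe : v (p : K) = e) (hb : 0 < b) (hpb : ¬ (p : ℤ) ∣ b)
    (hm : (p ^ 2 - 1) * b < p ^ 2 * m)
    (he : p * (p ^ 2 - 1) * b < e) (hme : p ^ 2 * (p - 1) * m + (2 * p * (p - 1) + 1) * b < e)
    {a μ : F} (ha : a ≠ 0) (hμ : μ ≠ 0) (hav : v0 a = -b) (hμv : v0 μ = -m)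
    {x₁ x₂ ε δ : K} (hx₁ : x₁ ^ p - x₁ = algebraMap F K a)
    (hx₂ : x₂ ^ p - x₂ = algebraMap F K (μ ^ p * a) +
      (x₁ ^ p + algebraMap F K a ^ p - (x₁ + algebraMap F K a) ^ p) / (p : K))
    {σ : K ≃ₐ[F] K} (hσx₁ : σ x₁ = x₁ + 1 + ε) (hε : ε ∈ hv.ball (e - p * (p - 1) * b))
    (hσx₂ : σ x₂ = x₂ + (x₁ ^ p + 1 - (x₁ + 1) ^ p) / (p : K) + δ) (hδ : δ ∈ hv.ball 0) :
    hv.Gains (σ.toLinearMap : Module.End F K) 0 ∧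
      hv.Gains (((σ ^ p).toLinearMap : Module.End F K) - 1) (p ^ 2 * m + b) := by
  have hp2 : (2 : ℤ) ≤ p := by exact_mod_cast hp.two_le
  have hp0 : (p : K) ≠ 0 := Nat.cast_ne_zero.2 hp.ne_zero
  have ha' : algebraMap F K a ≠ 0 := by simpa using ha
  have hμ' : algebraMap F K μ ≠ 0 := by simpa using hμ
  have hAv : v (algebraMap F K a) = -(p ^ 2 * b) := by rw [hram a ha, hav]; ring
  have hMv : v (algebraMap F K μ) = -(p ^ 2 * m) := by rw [hram μ hμ, hμv]; ring
  have hpp : 0 < (p : ℤ) ^ 2 * m := lt_of_le_of_lt (mul_nonneg (by nlinarith) hb.le) hm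
  have hm0 : 0 < m := pos_of_mul_pos_right hpp (by positivity)
  obtain ⟨hX0, hXv⟩ := hv.map_witt_generator hp hpe hb hm he ha' hμ' hAv hMv hx₁
    (by rw [hx₂, _root_.map_mul, _root_.map_pow])
  obtain ⟨-, hx₁v⟩ := hv.map_artinSchreier_root hp.two_le (b := p * b) (by positivity) ha'
    (by rw [hAv]; ring) hx₁
  have hx₁b := hv.mem_ball_of_le hx₁v.ge
  have hμb := hv.mem_ball_of_le hMv.ge
  have hcop : IsCoprime ((p ^ 2 : ℕ) : ℤ) (p ^ 2 * m + b) := by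
    have h1 : IsCoprime ((p : ℤ) ^ 2) b :=
      ((Nat.prime_iff_prime_int.1 hp).coprime_iff_not_dvd.2 hpb).pow_left
    push_cast
    rw [add_comm]
    exact IsCoprime.add_mul_left_right h1 m
  have hram' : ∀ x : F, x ≠ 0 → v (algebraMap F K x) = ((p ^ 2 : ℕ) : ℤ) * v0 x := by
    intro x hx
    rw [hram x hx]
    push_cast
    ring
  set X := x₂ - algebraMap F K μ * x₁ with hX
  have hXb := hv.mem_ball_of_le hXv.ge
  have hbp2 : 0 ≤ (p : ℤ) * b * (p - 2) := mul_nonneg (by positivity) (by omega)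
  have hbp3 : 0 ≤ (p : ℤ) ^ 2 * b * (p - 2) := mul_nonneg (by positivity) (by omega)
  have hσX : σ X ∈ hv.ball (-(p ^ 2 * m + b)) := by
    have hD : (x₁ ^ p + 1 - (x₁ + 1) ^ p) / (p : K) ∈ hv.ball (-(p ^ 2 * m + b)) := by
      have h1 := hv.add_pow_prime_sub_mem_ball (l := -((p - 1) * (p * b))) hp
        (hv.mem_ball_of_le hpe.ge) hx₁b hv.one_mem_ball (fun k hk hk' => by
          have : 0 ≤ (p - 1 - k) * (p * b) := mul_nonneg (by omega) (by positivity)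
          nlinarith)
      have h2 : (p : K)⁻¹ ∈ hv.ball (-e) := hv.mem_ball_of_le (by rw [hv.map_inv hp0, hpe])
      have h3 := neg_mem (hv.mul_mem_ball h1 h2)
      rw [show (x₁ ^ p + 1 - (x₁ + 1) ^ p) / (p : K) =
        -(((x₁ + 1) ^ p - x₁ ^ p - 1 ^ p) * (p : K)⁻¹) by rw [div_eq_mul_inv, one_pow]; ring]
      exact hv.ball_anti (by nlinarith) h3
    have hσX' : σ X = X + (x₁ ^ p + 1 - (x₁ + 1) ^ p) / (p : K) + δ -
        algebraMap F K μ * (1 + ε) := by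
      rw [hX, map_sub, _root_.map_mul, AlgEquiv.commutes, hσx₁, hσx₂]
      ring
    rw [hσX']
    refine sub_mem (add_mem (add_mem hXb hD) (hv.ball_anti (by omega) hδ))
      (hv.ball_anti ?_ (hv.mul_mem_ball hμb (add_mem hv.one_mem_ball
        (hv.ball_anti ?_ hε))))
    · linarith
    · nlinarith
  have hσ : hv.Gains (σ.toLinearMap : Module.End F K) 0 := by
    refine hv.gains_of_pow_basis hdeg hram' hX0 hXv hcop fun i => ?_
    rw [AlgEquiv.toLinearMap_apply, _root_.map_pow]
    exact hv.ball_anti (by linarith) (hv.pow_mem_ball hσX i)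
  refine ⟨hσ, hv.gains_of_pow_basis hdeg hram' hX0 hXv hcop fun i => ?_⟩
  have hu := hv.iterate_sub_mem_ball hp hpe hb hm0.le he hme hσ hμb hx₁b hσx₁ hε hσx₂ hδ
  have := hv.add_pow_sub_pow_mem_ball (by positivity) hXb hu i
  rwa [add_sub_cancel, ← _root_.map_pow] at this

end Galois

section Operators

variable {F K : Type*} [Field F] [Field K] [Algebra F K] {v : K → ℤ}

theorem descPoch_div_factorial_mem_ball [CharZero F] {w : F → ℤ} (hw : IsDiscVal w) {p : ℕ}
    (hp : p.Prime) (hpe : (p : F) ∈ hw.ball 1) {μ : F} {m : ℤ} (hm : 0 ≤ m)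
    (hμ : μ ∈ hw.ball (-m)) {i : ℕ} (hi : i < p) :
    (∏ k ∈ Finset.range i, (μ - (k : F))) / (i.factorial : F) ∈ hw.ball (-(i * m)) := by
  have hnum : ∏ k ∈ Finset.range i, (μ - (k : F)) ∈ hw.ball (-(i * m)) := by
    clear hi
    induction i with
    | zero => simpa using hw.one_mem_ball
    | succ i ih =>
      rw [Finset.prod_range_succ]
      exact hw.ball_anti (by push_cast; linarith) (hw.mul_mem_ball ih
        (sub_mem hμ (hw.ball_anti (by omega) (hw.natCast_mem_ball i))))
  have hfac : ((i.factorial : F))⁻¹ ∈ hw.ball 0 := by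
    refine hw.mem_ball_of_le ?_
    rw [hw.map_inv (Nat.cast_ne_zero.2 i.factorial_ne_zero),
      hw.map_natCast_of_coprime hpe i.factorial_ne_zero
        ((hp.coprime_iff_not_dvd.2 fun h => absurd (hp.dvd_factorial.1 h) (by omega)).symm)]
    simp
  rw [div_eq_mul_inv]
  simpa using hw.mul_mem_ball hnum hfac

/-- The gain of `Ψ₁` and of `Ψ₁ ^ p - Ψ₂`, where `Ψ₂ = σ ^ p - 1` and `1 + Ψ₁` is `σ` times a
truncated binomial series in `Ψ₂`. -/
theorem gains_truncated_exp {hv : IsDiscVal v} {p : ℕ} (hp : p.Prime) {e b M : ℤ} (hb : 0 ≤ b)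
    (hM : 0 ≤ M) (hpe : (p : K) ∈ hv.ball e) (hbM : p * b ≤ (p - 1) * (M + b))
    {σ : Module.End F K} (hσ : hv.Gains σ 0) (hσp : σ ^ (p ^ 2) = 1) {Ψ₁ Ψ₂ : Module.End F K}
    (hΨ₂ : Ψ₂ = σ ^ p - 1) (hΨ₂g : hv.Gains Ψ₂ (M + b)) {c : ℕ → F} (hc0 : c 0 = 1)
    (hc : ∀ i < p, algebraMap F K (c i) ∈ hv.ball (-(i * M)))
    (hΨ₁ : Ψ₁ = σ * (∑ i ∈ Finset.range p, c i • Ψ₂ ^ i) - 1) :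
    hv.Gains Ψ₁ 0 ∧ hv.Gains (Ψ₁ ^ p - Ψ₂) (e - (p - 1) * (M + b) + p * b) ∧ Commute Ψ₁ Ψ₂ := by
  set H : Module.End F K := ∑ i ∈ Finset.range (p - 1), c (i + 1) • Ψ₂ ^ i with hH
  have hE : ∑ i ∈ Finset.range p, c i • Ψ₂ ^ i = 1 + Ψ₂ * H := by
    obtain ⟨q, rfl⟩ : ∃ q, p = q + 1 := ⟨p - 1, by have := hp.pos; omega⟩
    rw [Finset.sum_range_succ', hc0, pow_zero, one_smul, add_comm, hH, Nat.add_sub_cancel,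
      Finset.mul_sum]
    simp only [mul_smul_comm, pow_succ']
  have hHg : hv.Gains H (-M) := by
    refine Gains.sum fun i hi => ?_
    rw [Finset.mem_range] at hi
    refine ((hΨ₂g.pow i).smul (hc (i + 1) (by omega))).anti ?_
    have : 0 ≤ (i : ℤ) * b := by positivity
    push_cast
    linarith
  have hcomm : Commute Ψ₂ H :=
    Commute.sum_right _ _ _ fun i _ => ((Commute.refl Ψ₂).pow_right i).smul_right _
  have hσΨ₂ : Commute σ Ψ₂ := by
    rw [hΨ₂]
    exact ((Commute.refl σ).pow_right p).sub_right (Commute.one_right σ)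
  have hσH : Commute σ H :=
    Commute.sum_right _ _ _ fun i _ => (hσΨ₂.pow_right i).smul_right _
  have hσE : Commute σ (1 + Ψ₂ * H) :=
    (Commute.one_right σ).add_right (hσΨ₂.mul_right hσH)
  rw [hE] at hΨ₁
  have hFg : hv.Gains (Ψ₂ * H) 0 := (hΨ₂g.mul hHg).anti (by linarith)
  have hΨ₁g : hv.Gains Ψ₁ 0 := by
    rw [hΨ₁]
    exact ((hσ.mul (Gains.one.add hFg)).anti (by simp)).sub Gains.one
  have hΨ₂p : hv.Gains (Ψ₂ ^ p) (e + (M + b)) := by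
    have h := (hΨ₂g.one_add_pow_prime_sub hp hpe (by positivity)).neg
    have h1 : (1 + Ψ₂) ^ p = 1 := by
      rw [hΨ₂, add_sub_cancel, ← pow_mul, ← sq, hσp]
    rw [h1] at h
    simpa using h
  refine ⟨hΨ₁g, ?_, ?_⟩
  · have hFp : hv.Gains ((Ψ₂ * H) ^ p) (e - (p - 1) * (M + b) + p * b) := by
      rw [hcomm.mul_pow]
      exact (hΨ₂p.mul (hHg.pow p)).anti (by linarith)
    have h1 := hΨ₁g.one_add_pow_prime_sub hp hpe le_rfl
    have h2 := hFg.one_add_pow_prime_sub hp hpe le_rfl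
    have h3 : (1 + Ψ₁) ^ p = σ ^ p * (1 + Ψ₂ * H) ^ p := by
      rw [hΨ₁, add_sub_cancel, hσE.mul_pow]
    have h4 : Ψ₁ ^ p - Ψ₂ = σ ^ p * (((1 + Ψ₂ * H) ^ p - 1 - (Ψ₂ * H) ^ p) + (Ψ₂ * H) ^ p) -
        ((1 + Ψ₁) ^ p - 1 - Ψ₁ ^ p) := by
      rw [h3, hΨ₂, sub_add_cancel, mul_sub, mul_one]
      abel
    rw [h4]
    exact (((hσ.pow p).mul ((h2.anti (by linarith)).add hFp)).anti (by simp)).sub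
      (h1.anti (by linarith))
  · rw [hΨ₁]
    exact ((hσΨ₂.mul_left ((Commute.one_left Ψ₂).add_left
      ((Commute.refl Ψ₂).mul_left hcomm.symm))).sub_left (Commute.one_left Ψ₂))

end Operators

end IsDiscVal

/-- Proposition 4.1: if `v₀(c) ≥ d₀ − d_j` and `j + r < p²` then
`c·Ψ^{(j)}·ρ_r ≡ c·π₀^{d_{j+r}−d_r}·ρ_{j+r} mod 𝔐₂^{p²e₀ − p·b₂ − (p²−p+1)·b₁}`,
with equality when there is no carry in adding the `p`-adic expansions of
`j` and `r`. -/
theorem statement14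
    (p : ℕ) (hp : p.Prime)
    (K0 K2 : Type*) [Field K0] [Field K2] [CharZero K0] [CharZero K2]
    [Algebra K0 K2] [IsGalois K0 K2] [FiniteDimensional K0 K2]
    (hdeg : Module.finrank K0 K2 = p ^ 2)
    (hcyc : IsCyclic (K2 ≃ₐ[K0] K2))
    (v0 : K0 → ℤ) (v2 : K2 → ℤ)
    (hv0 : IsDiscVal v0) (hv2 : IsDiscVal v2)
    (e0 : ℤ) (he0 : e0 = v0 (p : K0)) (he0pos : 1 ≤ e0)
    (hram : ∀ x : K0, x ≠ 0 → v2 (algebraMap K0 K2 x) = (p : ℤ) ^ 2 * v0 x)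
    (a1 μ a2 : K0) (ha1 : a1 ≠ 0) (hμ0 : μ ≠ 0)
    (hwitt : ∀ y : K0, y ^ p - y ≠ a1)
    (hnd : ¬ ((p : ℤ) ∣ v0 a1))
    (hneg : v0 a1 < 0)
    (hbd : -((p : ℤ) * e0) < ((p : ℤ) ^ 2 - 1) * v0 a1)
    (m : ℤ) (hm : m = -v0 μ) (hmpos : 0 < m)
    (hmu1 : (p : ℤ) ^ 2 * (p - 1) * m - (2 * p * (p - 1) + 1) * v0 a1 < (p : ℤ) ^ 2 * e0)
    (hmu2 : -(((p : ℤ) ^ 2 - 1) * v0 a1) < (p : ℤ) ^ 2 * m)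
    (ha2 : a2 = μ ^ p * a1)
    (x1 x2 : K2)
    (hx1 : x1 ^ p - x1 = algebraMap K0 K2 a1)
    (hx2 : x2 ^ p - x2 = algebraMap K0 K2 a2 +
      (x1 ^ p + (algebraMap K0 K2 a1) ^ p - (x1 + algebraMap K0 K2 a1) ^ p) / (p : K2))
    (hgen : Algebra.adjoin K0 {x1, x2} = ⊤)
    (b1 b2 : ℤ) (hb1 : b1 = -v0 a1) (hb2 : b2 = (p : ℤ) ^ 2 * m + b1)
    (σ1 : K2 ≃ₐ[K0] K2) (ε δ' : K2)
    (hσ1x1 : σ1 x1 = x1 + 1 + ε)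
    (hε : ε ≠ 0) (hεv : v2 ε = (p : ℤ) ^ 2 * e0 - p * (p - 1) * b1)
    (hσ1x2 : σ1 x2 = x2 + (x1 ^ p + 1 - (x1 + 1) ^ p) / (p : K2) + δ')
    (hδ' : δ' = 0 ∨ 0 < v2 δ')
    (Ψ1 Ψ2 : Module.End K0 K2)
    (hΨ2 : Ψ2 = ((σ1 ^ p).toLinearMap : Module.End K0 K2) - 1)
    (hΨ1 : Ψ1 = (σ1.toLinearMap : Module.End K0 K2) *
      (∑ i ∈ Finset.range p,
        ((∏ k ∈ Finset.range i, (μ - (k : K0))) / (Nat.factorial i : K0)) • Ψ2 ^ i) - 1)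
    (π0 : K0) (hπ0 : π0 ≠ 0) (hπ0v : v0 π0 = 1)
    (ρ0 : K2) (hρ0 : ρ0 ≠ 0) (hρ0v : v2 ρ0 = b2 % (p : ℤ) ^ 2)
    (d : ℕ → ℤ)
    (hd : ∀ a : ℕ, a < p ^ 2 →
      d a = Int.fdiv ((1 + ((a / p : ℕ) : ℤ)) * b2 + ((a % p : ℕ) : ℤ) * (p : ℤ) * b1)
        ((p : ℤ) ^ 2))
    (Ψf : ℕ → Module.End K0 K2)
    (hΨf : ∀ a : ℕ, Ψf a = if a < p ^ 2 then Ψ2 ^ (a / p) * Ψ1 ^ (a % p) else 0)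
    (ρ : K2) (hρ : ρ = algebraMap K0 K2 (π0 ^ d 0) * ρ0)
    (ρf : ℕ → K2) (hρf : ∀ a : ℕ, ρf a = algebraMap K0 K2 (π0 ^ (-d a)) * Ψf a ρ) :
    ∀ c : K0, ∀ j r : ℕ, (c = 0 ∨ d 0 - d j ≤ v0 c) →
      j < p ^ 2 → r < p ^ 2 → j + r < p ^ 2 →
      ((algebraMap K0 K2 c * Ψf j (ρf r) -
          algebraMap K0 K2 (c * π0 ^ (d (j + r) - d r)) * ρf (j + r) = 0) ∨
        (p : ℤ) ^ 2 * e0 - p * b2 - ((p : ℤ) ^ 2 - p + 1) * b1 ≤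
          v2 (algebraMap K0 K2 c * Ψf j (ρf r) -
          algebraMap K0 K2 (c * π0 ^ (d (j + r) - d r)) * ρf (j + r))) ∧
      (j % p + r % p < p ∧ j / p + r / p < p →
        algebraMap K0 K2 c * Ψf j (ρf r) =
          algebraMap K0 K2 (c * π0 ^ (d (j + r) - d r)) * ρf (j + r)) := by
  have hp2 : (2 : ℤ) ≤ p := by exact_mod_cast hp.two_le
  have hb1pos : 0 < b1 := by omega
  have hmb : ((p : ℤ) ^ 2 - 1) * b1 < p ^ 2 * m := by rw [hb1]; linarith
  have hpK0 : (p : K0) ≠ 0 := Nat.cast_ne_zero.2 hp.ne_zero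
  have hpe : v2 (p : K2) = (p : ℤ) ^ 2 * e0 := by
    rw [he0, ← hram _ hpK0, map_natCast]
  have hv0a : v0 a1 = -b1 := by omega
  obtain ⟨hσ, hΨ2g⟩ := hv2.gains_generator hp hdeg hram hpe hb1pos
    (by rwa [hb1, dvd_neg]) hmb
    (by rw [hv0a] at hbd; nlinarith)
    (by rw [hv0a] at hmu1; linarith) ha1 hμ0 hv0a (by omega : v0 μ = -m) hx1
    (by rw [hx2, ha2]) hσ1x1 (hv2.mem_ball_of_le hεv.ge) hσ1x2
    (hδ'.imp_right fun h => h.le)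
  rw [← hΨ2] at hΨ2g
  have hb2big : (p : ℤ) ^ 2 * b1 < b2 := by linarith
  have hpb1 : 0 < (p : ℤ) * b1 := by positivity
  have hpb1b2 : (p : ℤ) * b1 ≤ b2 := by nlinarith only [hpb1, hp2, hb2big]
  obtain ⟨hΨ1g, hdiff, hcomm⟩ := IsDiscVal.gains_truncated_exp (hv := hv2) hp (M := p ^ 2 * m)
    (e := p ^ 2 * e0) hb1pos.le (by positivity) (hv2.mem_ball_of_le hpe.ge)
    (by rw [← hb2]; nlinarith only [hpb1b2, hp2, hpb1]) hσ
    (by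
      rw [← AlgEquiv.pow_toLinearMap, ← hdeg, ← IsGalois.card_aut_eq_finrank K0 K2,
        pow_card_eq_one']
      rfl)
    (by rw [hΨ2, AlgEquiv.pow_toLinearMap]) hΨ2g
    (c := fun i => (∏ k ∈ Finset.range i, (μ - (k : K0))) / (Nat.factorial i : K0))
    (by simp)
    (fun i hi => by
      have h := IsDiscVal.descPoch_div_factorial_mem_ball hv0 hp
        (hv0.mem_ball_of_le (by omega)) hmpos.le (hv0.mem_ball_of_le (by omega : -m ≤ v0 μ)) hi
      rcases h with h | h
      · rw [h, map_zero]
        exact zero_mem _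
      · by_cases h0 : (∏ k ∈ Finset.range i, (μ - (k : K0))) / (Nat.factorial i : K0) = 0
        · rw [h0, map_zero]
          exact zero_mem _
        · refine hv2.mem_ball_of_le ?_
          rw [hram _ h0]
          nlinarith [mul_le_mul_of_nonneg_left h (by positivity : (0 : ℤ) ≤ (p : ℤ) ^ 2)])
    hΨ1
  rw [← hb2] at hΨ2g hdiff
  intro c j r hc hj hr hjr
  have hpp : 0 < (p : ℤ) ^ 2 := by positivity
  have hdle (a : ℕ) (ha : a < p ^ 2) :
      (p : ℤ) ^ 2 * d a ≤ (1 + ((a / p : ℕ) : ℤ)) * b2 + ((a % p : ℕ) : ℤ) * (p : ℤ) * b1 := by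
    rw [hd a ha, Int.fdiv_eq_ediv_of_nonneg _ hpp.le]
    exact Int.mul_ediv_self_le hpp.ne'
  have hd0 : (p : ℤ) ^ 2 * d 0 = b2 - b2 % p ^ 2 := by
    rw [hd 0 (pow_pos hp.pos 2), Int.fdiv_eq_ediv_of_nonneg _ hpp.le]
    simp only [Nat.zero_div, Nat.zero_mod, Nat.cast_zero, add_zero, one_mul, zero_mul]
    linarith [Int.mul_ediv_add_emod b2 (p ^ 2)]
  have hρb : ρ ∈ hv2.ball b2 := by
    refine hv2.mem_ball_of_le ?_
    rw [hρ, hv2.map_mul _ _ (by simp [zpow_ne_zero, hπ0]) hρ0, hram _ (zpow_ne_zero _ hπ0),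
      hv0.map_zpow hπ0, hπ0v, hρ0v]
    linarith
  have hfac : algebraMap K0 K2 c * Ψf j (ρf r) -
      algebraMap K0 K2 (c * π0 ^ (d (j + r) - d r)) * ρf (j + r) =
      algebraMap K0 K2 (c * π0 ^ (-d r)) * ((Ψf j * Ψf r - Ψf (j + r)) ρ) := by
    have hz : π0 ^ (d (j + r) - d r) * π0 ^ (-d (j + r)) = π0 ^ (-d r) := by
      rw [← zpow_add₀ hπ0]
      congr 1
      ring
    rw [hρf, hρf, ← Algebra.smul_def (π0 ^ (-d r)), map_smul, Algebra.smul_def, ← mul_assoc,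
      ← mul_assoc, ← map_mul, ← map_mul, mul_assoc c, hz, LinearMap.sub_apply,
      Module.End.mul_apply, mul_sub]
  have hΨmul : Ψf j * Ψf r = Ψ2 ^ (j / p + r / p) * Ψ1 ^ (j % p + r % p) := by
    rw [hΨf, hΨf, if_pos hj, if_pos hr, pow_add, pow_add]
    simp only [mul_assoc]
    rw [← mul_assoc (Ψ1 ^ (j % p)), (hcomm.pow_pow _ _).eq]
    simp only [mul_assoc]
  have hsum : j + r = p * (j / p + r / p) + (j % p + r % p) := by
    have h1 := Nat.div_add_mod j p
    have h2 := Nat.div_add_mod r p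
    rw [mul_add]
    omega
  rcases lt_or_ge (j % p + r % p) p with hlt | hge
  · have hq : (j + r) / p = j / p + r / p := by
      rw [hsum, Nat.mul_add_div hp.pos, Nat.div_eq_of_lt hlt, add_zero]
    have hmod : (j + r) % p = j % p + r % p := by
      rw [hsum, Nat.mul_add_mod, Nat.mod_eq_of_lt hlt]
    have h0 : algebraMap K0 K2 c * Ψf j (ρf r) -
        algebraMap K0 K2 (c * π0 ^ (d (j + r) - d r)) * ρf (j + r) = 0 := by
      rw [hfac, hΨmul, hΨf (j + r), if_pos hjr, hq, hmod, sub_self, LinearMap.zero_apply, mul_zero]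
    exact ⟨Or.inl h0, fun _ => sub_eq_zero.1 h0⟩
  · refine ⟨?_, fun h => absurd h.1 (not_lt.2 hge)⟩
    obtain ⟨t, ht⟩ := Nat.exists_eq_add_of_le hge
    have hjp := Nat.mod_lt j hp.pos
    have hrp := Nat.mod_lt r hp.pos
    have htp : t < p := by omega
    have hsum' : j + r = p * (j / p + r / p + 1) + t := by rw [hsum, ht]; ring
    have hq : (j + r) / p = j / p + r / p + 1 := by
      rw [hsum', Nat.mul_add_div hp.pos, Nat.div_eq_of_lt htp, add_zero]
    have hmod : (j + r) % p = t := by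
      rw [hsum', Nat.mul_add_mod, Nat.mod_eq_of_lt htp]
    have hop : Ψf j * Ψf r - Ψf (j + r) =
        Ψ2 ^ (j / p + r / p) * ((Ψ1 ^ p - Ψ2) * Ψ1 ^ t) := by
      rw [hΨmul, hΨf (j + r), if_pos hjr, hq, hmod, ht, pow_add Ψ1 p t, pow_succ, sub_mul, mul_sub]
      simp only [mul_assoc]
    have hval := ((hΨ2g.pow (j / p + r / p)).mul (hdiff.mul (hΨ1g.pow t))) b2 ρ hρb
    rw [← hop] at hval
    have hcb : algebraMap K0 K2 (c * π0 ^ (-d r)) ∈ hv2.ball (p ^ 2 * (d 0 - d j - d r)) := by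
      by_cases hc0 : c = 0
      · rw [hc0, zero_mul, map_zero]
        exact zero_mem _
      · refine hv2.mem_ball_of_le ?_
        rw [hram _ (mul_ne_zero hc0 (zpow_ne_zero _ hπ0)), hv0.map_mul _ _ hc0 (zpow_ne_zero _ hπ0),
          hv0.map_zpow hπ0, hπ0v]
        have := hc.resolve_left hc0
        exact mul_le_mul_of_nonneg_left (by omega) hpp.le
    have hmem := hv2.mul_mem_ball hcb hval
    rw [← hfac] at hmem
    refine hv2.ball_anti ?_ hmem
    have hb2mod : b2 % (p : ℤ) ^ 2 ≤ b1 := by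
      rw [hb2, Int.mul_add_emod_self_left]
      linarith [Int.mul_ediv_add_emod b1 (p ^ 2),
        mul_nonneg hpp.le (Int.ediv_nonneg hb1pos.le hpp.le)]
    have hdj := hdle j hj
    have hdr := hdle r hr
    have hjr0 : ((j % p : ℕ) : ℤ) + ((r % p : ℕ) : ℤ) ≤ 2 * p - 2 := by omega
    have hdig := mul_le_mul_of_nonneg_right hjr0 hpb1.le
    rw [Nat.cast_add]
    linarith only [hdj, hdr, hd0, hb2mod, hdig, hb2big, hpb1]
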